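/- arXiv:1908.06794 — 2 statements merged into one kernel-verified Lean document; each statement's English description precedes it below -/
import Mathlib

section
/- Let n ≥ 1, let k be an integer with 1 < k ≤ n, and let a ∈ ℝ^{n+1} with |a| > 1. For a function f : S^n → ℝ the following are equivalent: (i) (M_{a*} f)(y) = (M_{a*} f)(R_a y) for all y ∈ S^n; (ii) f(x) = ρ_{a*}(x) f(τ_a x) for all x ∈ S^n. Here (M_{a*} f)(y) = ( s_{a*}/(1 − a*·y) )^{k−1} f(φ_{a*} y), ρ_{a*}(x) = ( (|a|² − 1)/|a − x|² )^{k−1}, and τ_a x = ((|a|² − 1) x + 2(1 − x·a) a)/|x − a|². -/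
open MeasureTheory Metric Matrix
open scoped InnerProductSpace ENNReal

/-- `Euc m` is the Euclidean space `ℝ^m`. -/
abbrev Euc (m : ℕ) : Type := EuclideanSpace ℝ (Fin m)

/-- The Möbius transformation `φ_b x = (b − P_b x − s_b Q_b x)/(1 − x·b)`,
where `P_b x = ((b·x)/|b|²) b`, `Q_b x = x − P_b x`, `s_b = √(1 − |b|²)`. -/
noncomputable def phiMap {n : ℕ} (b x : Euc (n + 1)) : Euc (n + 1) :=
  (1 - ⟪x, b⟫_ℝ)⁻¹ •
    (b - (⟪b, x⟫_ℝ / ‖b‖ ^ 2) • b -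
      Real.sqrt (1 - ‖b‖ ^ 2) • (x - (⟪b, x⟫_ℝ / ‖b‖ ^ 2) • b))

/-- `a* = a/|a|²`, the inversion of `a` in the unit sphere. -/
noncomputable def aStar {n : ℕ} (a : Euc (n + 1)) : Euc (n + 1) := (‖a‖ ^ 2)⁻¹ • a

/-- `s_{a*} = √(1 − |a*|²)`. -/
noncomputable def sStar {n : ℕ} (a : Euc (n + 1)) : ℝ := Real.sqrt (1 - ‖aStar a‖ ^ 2)

/-- The reflection `R_a x = x − 2((x·a)/|a|²) a` in the hyperplane `a^⊥`. -/
noncomputable def reflMap {n : ℕ} (a x : Euc (n + 1)) : Euc (n + 1) :=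
  x - ((2 * ⟪x, a⟫_ℝ) / ‖a‖ ^ 2) • a

/-- `τ_a x = ((|a|² − 1) x + 2(1 − x·a) a)/|x − a|²`, the second point at which the
line through `a` and `x` meets the unit sphere. -/
noncomputable def tauMap {n : ℕ} (a x : Euc (n + 1)) : Euc (n + 1) :=
  (‖x - a‖ ^ 2)⁻¹ • ((‖a‖ ^ 2 - 1) • x + (2 * (1 - ⟪x, a⟫_ℝ)) • a)

/-!
The map `φ_{a*}` is a projective involution of the ball which sends the point `a` to infinity. It
therefore exchanges the lines through `a` with the lines parallel to `a`, and so conjugates `τ_a`,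
which swaps the two ends of a chord on a line through `a`, to the reflection `R_a`, which swaps the
two ends of a chord parallel to `a`. Quantitatively, with `w(y) = s_{a*}/(1 − a*·y)` the base of the
weight in `M_{a*}`, one has `φ_{a*} y − a = −w(y) (Q_a y + s_{a*} a)`, where the vector in
parentheses is invariant under `R_a`. Hence `w(R_a y)/w(y) = (|a|² − 1)/|a − φ_{a*} y|²` for `y` on
the sphere, and condition (i) at `y` is condition (ii) at `x = φ_{a*} y`.
-/

lemma rpow_smul_eq_rpow_smul_iff {F : Type*} [MulAction ℝ F] {r s : ℝ} (hr : 0 < r) (hs : 0 ≤ s)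
    (p : ℝ) (u v : F) : r ^ p • u = s ^ p • v ↔ u = (s / r) ^ p • v := by
  rw [Real.div_rpow hs hr.le, div_eq_inv_mul, mul_smul,
    eq_inv_smul_iff₀ (Real.rpow_pos_of_pos hr p).ne']

lemma one_sub_norm_sq_pos {E : Type*} [SeminormedAddGroup E] {b : E} (hb : ‖b‖ < 1) :
    0 < 1 - ‖b‖ ^ 2 :=
  sub_pos.2 (pow_lt_one₀ (norm_nonneg b) hb two_ne_zero)

section InnerProductSpace

variable {E : Type*} [NormedAddCommGroup E] [InnerProductSpace ℝ E] {b x : E}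

lemma inner_lt_one (hb : ‖b‖ < 1) (hx : ‖x‖ ≤ 1) : ⟪b, x⟫_ℝ < 1 :=
  calc ⟪b, x⟫_ℝ ≤ ‖b‖ * ‖x‖ := real_inner_le_norm b x
    _ ≤ ‖b‖ := mul_le_of_le_one_right (norm_nonneg b) hx
    _ < 1 := hb

lemma inner_div_norm_sq_mul_norm_sq (b x : E) :
    ⟪b, x⟫_ℝ / ‖b‖ ^ 2 * ‖b‖ ^ 2 = ⟪b, x⟫_ℝ :=
  div_mul_cancel_of_imp fun h => by simp [norm_eq_zero.1 (pow_eq_zero_iff two_ne_zero |>.1 h)]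

lemma norm_sub_smul_sub_smul_sq {c s : ℝ} (hc : c * ‖b‖ ^ 2 = ⟪b, x⟫_ℝ)
    (hs : s ^ 2 = 1 - ‖b‖ ^ 2) :
    ‖b - c • b - s • (x - c • b)‖ ^ 2 =
      (1 - ⟪b, x⟫_ℝ) ^ 2 - (1 - ‖b‖ ^ 2) * (1 - ‖x‖ ^ 2) := by
  have orthogonal : ⟪b, x - c • b⟫_ℝ = 0 := by
    rw [inner_sub_right, real_inner_smul_right, real_inner_self_eq_norm_sq, hc, sub_self]
  have norm_parallel : ‖b - c • b‖ ^ 2 = (1 - c) ^ 2 * ‖b‖ ^ 2 := by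
    rw [show b - c • b = (1 - c) • b by module, norm_smul, mul_pow, Real.norm_eq_abs, sq_abs]
  have norm_perpendicular : ‖x - c • b‖ ^ 2 = ‖x‖ ^ 2 - c * ⟪b, x⟫_ℝ := by
    rw [norm_sub_sq_real, norm_smul, mul_pow, Real.norm_eq_abs, sq_abs, real_inner_smul_right,
      real_inner_comm]
    linear_combination c * hc
  rw [norm_sub_sq_real, real_inner_smul_right, inner_sub_left, real_inner_smul_left, orthogonal,
    norm_parallel, norm_smul, mul_pow, Real.norm_eq_abs, sq_abs, norm_perpendicular]
  linear_combination (‖x‖ ^ 2 - c * ⟪b, x⟫_ℝ) * hs + (c - 2 + ⟪b, x⟫_ℝ) * hc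

end InnerProductSpace

section InversePoint

variable {n : ℕ} {a : Euc (n + 1)}

lemma norm_aStar (a : Euc (n + 1)) : ‖aStar a‖ = ‖a‖⁻¹ := by
  rw [aStar, norm_smul, norm_inv, norm_pow, norm_norm]
  field

lemma norm_aStar_lt_one (ha : 1 < ‖a‖) : ‖aStar a‖ < 1 := by
  rw [norm_aStar]
  exact inv_lt_one_of_one_lt₀ ha

lemma norm_sq_smul_aStar (a : Euc (n + 1)) : ‖a‖ ^ 2 • aStar a = a := by
  rcases eq_or_ne a 0 with rfl | ha
  · simp
  · exact smul_inv_smul₀ (by positivity) a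

lemma sStar_sq (ha : 1 ≤ ‖a‖) : sStar a ^ 2 = 1 - (‖a‖ ^ 2)⁻¹ := by
  rw [sStar, norm_aStar, inv_pow, Real.sq_sqrt]
  exact sub_nonneg.2 (inv_le_one_of_one_le₀ (one_le_pow₀ ha))

end InversePoint

section Reflection

variable {n : ℕ}

lemma reflMap_eq_reflection (a y : Euc (n + 1)) : reflMap a y = (ℝ ∙ a)ᗮ.reflection y := by
  rw [Submodule.reflection_orthogonal_apply, Submodule.reflection_singleton_apply, reflMap,
    real_inner_comm]
  simp only [RCLike.ofReal_real_eq_id, id_eq]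
  module

lemma norm_reflMap (a y : Euc (n + 1)) : ‖reflMap a y‖ = ‖y‖ := by
  rw [reflMap_eq_reflection, LinearIsometryEquiv.norm_map]

lemma reflMap_eq_sub_smul (a y : Euc (n + 1)) :
    reflMap a y = y - (2 * ⟪aStar a, y⟫_ℝ) • a := by
  rw [reflMap, aStar, real_inner_smul_left, real_inner_comm]
  module

lemma inner_aStar_reflMap (a y : Euc (n + 1)) :
    ⟪aStar a, reflMap a y⟫_ℝ = -⟪aStar a, y⟫_ℝ := by
  have inner_aStar_self : ⟪aStar a, y⟫_ℝ * ⟪aStar a, a⟫_ℝ = ⟪aStar a, y⟫_ℝ := by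
    rcases eq_or_ne a 0 with rfl | ha
    · simp [aStar]
    · have : ‖a‖ ≠ 0 := norm_ne_zero_iff.2 ha
      simp only [aStar, real_inner_smul_left, real_inner_self_eq_norm_sq]
      field
  rw [reflMap_eq_sub_smul, inner_sub_right, real_inner_smul_right]
  linear_combination -2 * inner_aStar_self

end Reflection

section Moebius

variable {n : ℕ} {b x : Euc (n + 1)}

lemma inner_phiMap (b x : Euc (n + 1)) :
    ⟪b, phiMap b x⟫_ℝ = (‖b‖ ^ 2 - ⟪b, x⟫_ℝ) / (1 - ⟪b, x⟫_ℝ) := by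
  simp only [phiMap, real_inner_smul_right, inner_sub_right, real_inner_self_eq_norm_sq,
    inner_div_norm_sq_mul_norm_sq, real_inner_comm b x]
  ring

lemma one_sub_norm_phiMap_sq (hb : ‖b‖ ≤ 1) (hx : ⟪b, x⟫_ℝ ≠ 1) :
    1 - ‖phiMap b x‖ ^ 2 = (1 - ‖b‖ ^ 2) * (1 - ‖x‖ ^ 2) / (1 - ⟪b, x⟫_ℝ) ^ 2 := by
  have hs : √(1 - ‖b‖ ^ 2) ^ 2 = 1 - ‖b‖ ^ 2 :=
    Real.sq_sqrt (sub_nonneg.2 (pow_le_one₀ (norm_nonneg b) hb))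
  have hden : 1 - ⟪b, x⟫_ℝ ≠ 0 := sub_ne_zero.2 hx.symm
  rw [phiMap, real_inner_comm, norm_smul, mul_pow, norm_inv, inv_pow, Real.norm_eq_abs, sq_abs,
    norm_sub_smul_sub_smul_sq (inner_div_norm_sq_mul_norm_sq b x) hs]
  field

lemma norm_phiMap_eq_one (hb : ‖b‖ < 1) (hx : ‖x‖ = 1) : ‖phiMap b x‖ = 1 := by
  have hne : ⟪b, x⟫_ℝ ≠ 1 := (inner_lt_one hb hx.le).ne
  have h : 1 - ‖phiMap b x‖ ^ 2 = 0 := by simp [one_sub_norm_phiMap_sq hb.le hne, hx]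
  exact (pow_eq_one_iff_of_nonneg (norm_nonneg _) two_ne_zero).1 (sub_eq_zero.1 h).symm

lemma phiMap_phiMap (hb : ‖b‖ < 1) (hx : ⟪b, x⟫_ℝ ≠ 1) : phiMap b (phiMap b x) = x := by
  rcases eq_or_ne b 0 with rfl | hb0
  · simp [phiMap]
  have hβ : 0 < 1 - ‖b‖ ^ 2 := one_sub_norm_sq_pos hb
  have hs : √(1 - ‖b‖ ^ 2) ^ 2 = 1 - ‖b‖ ^ 2 := Real.sq_sqrt hβ.le
  have hden : 1 - ⟪b, x⟫_ℝ ≠ 0 := sub_ne_zero.2 hx.symm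
  have hden' : 1 - ⟪b, phiMap b x⟫_ℝ = (1 - ‖b‖ ^ 2) / (1 - ⟪b, x⟫_ℝ) := by
    rw [inner_phiMap]
    field
  rw [phiMap, real_inner_comm, hden', inner_phiMap, phiMap, real_inner_comm b x]
  have hb' : ‖b‖ ≠ 0 := norm_ne_zero_iff.2 hb0
  generalize √(1 - ‖b‖ ^ 2) = s at *
  generalize ⟪b, x⟫_ℝ = t at *
  generalize ‖b‖ = r at *
  match_scalars
  · field_simp
    linear_combination -t * hs
  · field_simp
    linear_combination hs

end Moebius

section Weight

variable {n : ℕ} {a b y : Euc (n + 1)}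

/-- The factor `w(y) = s_b/(1 − b·y)` whose powers weight the composition with `φ_b` in the operator
`M_b`. -/
noncomputable def phiWeight (b y : Euc (n + 1)) : ℝ := √(1 - ‖b‖ ^ 2) / (1 - ⟪b, y⟫_ℝ)

lemma phiWeight_pos (hb : ‖b‖ < 1) (hy : ‖y‖ ≤ 1) : 0 < phiWeight b y :=
  div_pos (Real.sqrt_pos.2 (one_sub_norm_sq_pos hb)) (sub_pos.2 (inner_lt_one hb hy))

lemma phiWeight_reflMap_div_phiWeight (ha : 1 < ‖a‖) (y : Euc (n + 1)) :
    phiWeight (aStar a) (reflMap a y) / phiWeight (aStar a) y =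
      (1 - ⟪aStar a, y⟫_ℝ) / (1 + ⟪aStar a, y⟫_ℝ) := by
  have hs : √(1 - ‖aStar a‖ ^ 2) ≠ 0 :=
    (Real.sqrt_pos.2 (one_sub_norm_sq_pos (norm_aStar_lt_one ha))).ne'
  rw [phiWeight, phiWeight, inner_aStar_reflMap, sub_neg_eq_add, div_div_div_comm, div_self hs,
    one_div_div]

lemma phiMap_aStar_sub (ha : 1 ≤ ‖a‖) (hy : ⟪aStar a, y⟫_ℝ ≠ 1) :
    phiMap (aStar a) y - a =
      -phiWeight (aStar a) y • (y - ⟪aStar a, y⟫_ℝ • a + sStar a • a) := by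
  have hden : 1 - ⟪aStar a, y⟫_ℝ ≠ 0 := sub_ne_zero.2 hy.symm
  have proj : (⟪aStar a, y⟫_ℝ / ‖aStar a‖ ^ 2) • aStar a = ⟪aStar a, y⟫_ℝ • a := by
    rw [norm_aStar, inv_pow, div_inv_eq_mul, mul_smul, norm_sq_smul_aStar]
  have sub_eq : aStar a - a = -sStar a ^ 2 • a := by
    rw [sStar_sq ha, aStar]
    module
  calc phiMap (aStar a) y - a
      = (1 - ⟪aStar a, y⟫_ℝ)⁻¹ • ((aStar a - a) - sStar a • (y - ⟪aStar a, y⟫_ℝ • a)) := by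
        rw [phiMap, proj, real_inner_comm, ← sStar]
        match_scalars <;> field
    _ = -phiWeight (aStar a) y • (y - ⟪aStar a, y⟫_ℝ • a + sStar a • a) := by
        rw [sub_eq, phiWeight, ← sStar]
        match_scalars <;> field

end Weight

section Conjugation

variable {n : ℕ} {a x y : Euc (n + 1)}

lemma phiMap_aStar_reflMap_eq_lineMap (ha : 1 < ‖a‖) (hy : ‖y‖ ≤ 1) :
    phiMap (aStar a) (reflMap a y) = AffineMap.lineMap a (phiMap (aStar a) y)
      (phiWeight (aStar a) (reflMap a y) / phiWeight (aStar a) y) := by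
  have hb : ‖aStar a‖ < 1 := norm_aStar_lt_one ha
  have hRy : ‖reflMap a y‖ ≤ 1 := (norm_reflMap a y).trans_le hy
  have hw : phiWeight (aStar a) y ≠ 0 := (phiWeight_pos hb hy).ne'
  have direction_reflMap : reflMap a y - ⟪aStar a, reflMap a y⟫_ℝ • a + sStar a • a =
      y - ⟪aStar a, y⟫_ℝ • a + sStar a • a := by
    rw [inner_aStar_reflMap, reflMap_eq_sub_smul]
    module
  rw [AffineMap.lineMap_apply, vsub_eq_sub, vadd_eq_add, ← sub_eq_iff_eq_add,
    phiMap_aStar_sub ha.le (inner_lt_one hb hRy).ne, phiMap_aStar_sub ha.le (inner_lt_one hb hy).ne,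
    direction_reflMap, smul_smul, mul_neg, div_mul_cancel₀ _ hw]

lemma tauMap_eq_lineMap (hx : ‖x‖ = 1) (hxa : x ≠ a) :
    tauMap a x = AffineMap.lineMap a x ((‖a‖ ^ 2 - 1) / ‖a - x‖ ^ 2) := by
  have hdist : ‖a - x‖ ≠ 0 := norm_ne_zero_iff.2 (sub_ne_zero.2 hxa.symm)
  have hcoeff : 2 * (1 - ⟪x, a⟫_ℝ) = ‖a - x‖ ^ 2 - (‖a‖ ^ 2 - 1) := by
    rw [norm_sub_sq_real, hx, real_inner_comm]
    ring
  rw [tauMap, hcoeff, AffineMap.lineMap_apply_module, norm_sub_rev x a]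
  match_scalars <;> field_simp

lemma norm_sub_phiMap_aStar_sq (ha : 1 < ‖a‖) (hy : ‖y‖ = 1) :
    ‖a - phiMap (aStar a) y‖ ^ 2 =
      (‖a‖ ^ 2 - 1) * ((1 + ⟪aStar a, y⟫_ℝ) / (1 - ⟪aStar a, y⟫_ℝ)) := by
  have hb : ‖aStar a‖ < 1 := norm_aStar_lt_one ha
  have ha0 : ‖a‖ ≠ 0 := by positivity
  have hden : 1 - ⟪aStar a, y⟫_ℝ ≠ 0 := (sub_pos.2 (inner_lt_one hb hy.le)).ne'
  have hinner : ⟪a, phiMap (aStar a) y⟫_ℝ =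
      (1 - ‖a‖ ^ 2 * ⟪aStar a, y⟫_ℝ) / (1 - ⟪aStar a, y⟫_ℝ) := by
    nth_rw 1 [← norm_sq_smul_aStar a]
    rw [real_inner_smul_left, inner_phiMap, norm_aStar]
    field
  rw [norm_sub_sq_real, norm_phiMap_eq_one hb hy, hinner]
  field

lemma norm_sq_sub_one_div_norm_sub_phiMap_aStar_sq (ha : 1 < ‖a‖) (hy : ‖y‖ = 1) :
    (‖a‖ ^ 2 - 1) / ‖a - phiMap (aStar a) y‖ ^ 2 =
      phiWeight (aStar a) (reflMap a y) / phiWeight (aStar a) y := by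
  have hA : ‖a‖ ^ 2 - 1 ≠ 0 := (sub_pos.2 (one_lt_pow₀ ha two_ne_zero)).ne'
  rw [phiWeight_reflMap_div_phiWeight ha, norm_sub_phiMap_aStar_sq ha hy, div_mul_cancel_left₀ hA,
    inv_div]

theorem tauMap_phiMap_aStar (ha : 1 < ‖a‖) (hy : ‖y‖ = 1) :
    tauMap a (phiMap (aStar a) y) = phiMap (aStar a) (reflMap a y) := by
  have hφ : ‖phiMap (aStar a) y‖ = 1 := norm_phiMap_eq_one (norm_aStar_lt_one ha) hy
  have hne : phiMap (aStar a) y ≠ a := fun h => ha.ne' (h ▸ hφ)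
  rw [tauMap_eq_lineMap hφ hne, norm_sq_sub_one_div_norm_sub_phiMap_aStar_sq ha hy,
    phiMap_aStar_reflMap_eq_lineMap ha hy.le]

end Conjugation

theorem statement18_general {n : ℕ} {F : Type*} [MulAction ℝ F] (p : ℝ) {a : Euc (n + 1)}
    (ha : 1 < ‖a‖) (f : Euc (n + 1) → F) :
    (∀ y ∈ sphere (0 : Euc (n + 1)) 1,
        (sStar a / (1 - ⟪aStar a, y⟫_ℝ)) ^ p • f (phiMap (aStar a) y) =
          (sStar a / (1 - ⟪aStar a, reflMap a y⟫_ℝ)) ^ p •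
            f (phiMap (aStar a) (reflMap a y))) ↔
      ∀ x ∈ sphere (0 : Euc (n + 1)) 1,
        f x = ((‖a‖ ^ 2 - 1) / ‖a - x‖ ^ 2) ^ p • f (tauMap a x) := by
  have hb : ‖aStar a‖ < 1 := norm_aStar_lt_one ha
  simp only [mem_sphere_zero_iff_norm]
  have pointwise (y : Euc (n + 1)) (hy : ‖y‖ = 1) :
      (phiWeight (aStar a) y ^ p • f (phiMap (aStar a) y) =
          phiWeight (aStar a) (reflMap a y) ^ p • f (phiMap (aStar a) (reflMap a y))) ↔
        f (phiMap (aStar a) y) = ((‖a‖ ^ 2 - 1) / ‖a - phiMap (aStar a) y‖ ^ 2) ^ p •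
          f (tauMap a (phiMap (aStar a) y)) := by
    rw [tauMap_phiMap_aStar ha hy, norm_sq_sub_one_div_norm_sub_phiMap_aStar_sq ha hy]
    exact rpow_smul_eq_rpow_smul_iff (phiWeight_pos hb hy.le)
      (phiWeight_pos hb ((norm_reflMap a y).trans hy).le).le p _ _
  constructor
  · intro h x hx
    have hφ : ‖phiMap (aStar a) x‖ = 1 := norm_phiMap_eq_one hb hx
    have hne : ⟪aStar a, x⟫_ℝ ≠ 1 := (inner_lt_one hb hx.le).ne
    simpa only [phiMap_phiMap hb hne] using (pointwise _ hφ).1 (h _ hφ)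
  · exact fun h y hy => (pointwise y hy).2 (h _ (norm_phiMap_eq_one hb hy))

/-- Equivalence of the symmetry conditions (5.5) and (5.9): for
`f : S^n → ℝ`, one has `(M_{a*}f)(y) = (M_{a*}f)(R_a y)` for all `y ∈ S^n` iff
`f(x) = ρ_{a*}(x) f(τ_a x)` for all `x ∈ S^n`, where
`(M_{a*}f)(y) = (s_{a*}/(1 − a*·y))^{k−1} f(φ_{a*} y)` and
`ρ_{a*}(x) = ((|a|² − 1)/|a − x|²)^{k−1}`. -/
theorem statement18 (n k : ℕ) (hn : 1 ≤ n) (hk : 1 < k) (hkn : k ≤ n)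
    (a : Euc (n + 1)) (ha : 1 < ‖a‖)
    (f : Euc (n + 1) → ℝ) :
    (∀ y ∈ sphere (0 : Euc (n + 1)) 1,
        (sStar a / (1 - ⟪aStar a, y⟫_ℝ)) ^ (k - 1) * f (phiMap (aStar a) y) =
          (sStar a / (1 - ⟪aStar a, reflMap a y⟫_ℝ)) ^ (k - 1) *
            f (phiMap (aStar a) (reflMap a y))) ↔
      ∀ x ∈ sphere (0 : Euc (n + 1)) 1,
        f x = ((‖a‖ ^ 2 - 1) / ‖a - x‖ ^ 2) ^ (k - 1) * f (tauMap a x) := by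
  simpa only [Real.rpow_natCast, smul_eq_mul] using statement18_general (k - 1 : ℕ) ha f
end

section
/- Let n ≥ 1 and let b ∈ ℝ^{n+1} with 0 < |b| < 1. Then for every function f integrable on S^n with respect to the n-dimensional Hausdorff measure, ∫_{S^n} f(x) dH^n(x) = (1 − |b|²)^{n/2} ∫_{S^n} f(φ_b y) / (1 − b·y)^n dH^n(y). -/
open MeasureTheory Metric Matrix
open scoped InnerProductSpace ENNReal

open scoped NNReal Topology

/-!
On the unit sphere `|φ_b x - φ_b y|² = w(x) w(y) |x - y|²` with `w(x) = s_b / (1 - b·x)`. Hence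
where `w` lies between `c` and `r c`, the map `φ_b` is `r c`-Lipschitz and multiplies `H^d` by at
most `r ^ d * w ^ d`. Cutting the sphere along the level sets `r ^ k ≤ w < r ^ (k + 1)` and letting
`r → 1` gives `H^d (φ_b A) ≤ ∫_A w ^ d dH^d`. The inverse of `φ_b` satisfies the same identity with
factor `w⁻¹`, so this inequality is an equality.
-/

/-- The geometric mean-value property `|φ x - φ y|² = w x * w y * |x - y|²`, which characterizes
Möbius maps between metric spaces; `w` plays the role of the conformal factor `|φ'|`. -/
structure IsMobiusWith {X Y : Type*} [PseudoEMetricSpace X] [PseudoEMetricSpace Y]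
    (w : X → ℝ≥0) (φ : X → Y) : Prop where
  factor_ne_zero : ∀ x, w x ≠ 0
  edist_sq : ∀ x y, edist (φ x) (φ y) ^ 2 = w x * w y * edist x y ^ 2

namespace IsMobiusWith

section PseudoEMetric

variable {X Y : Type*} [PseudoEMetricSpace X] [PseudoEMetricSpace Y] {w : X → ℝ≥0}

theorem symm {e : X ≃ Y} (h : IsMobiusWith w e) :
    IsMobiusWith (fun y ↦ (w (e.symm y))⁻¹) e.symm where
  factor_ne_zero y := inv_ne_zero (h.factor_ne_zero _)
  edist_sq y z := by
    have hy := h.factor_ne_zero (e.symm y)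
    have hz := h.factor_ne_zero (e.symm z)
    have hcancel : (w (e.symm y))⁻¹ * (w (e.symm z))⁻¹ * (w (e.symm y) * w (e.symm z)) = 1 := by
      field_simp
    have hyz := h.edist_sq (e.symm y) (e.symm z)
    rw [e.apply_symm_apply, e.apply_symm_apply] at hyz
    rw [hyz, ← mul_assoc]
    norm_cast
    rw [hcancel, ENNReal.coe_one, one_mul]

theorem lipschitzOnWith {φ : X → Y} (h : IsMobiusWith w φ) {A : Set X} {K : ℝ≥0}
    (hK : ∀ x ∈ A, w x ≤ K) : LipschitzOnWith K φ A := by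
  intro x hx y hy
  rw [← ENNReal.pow_le_pow_left_iff two_ne_zero, h.edist_sq, mul_pow, sq (K : ℝ≥0∞)]
  gcongr
  exacts [hK x hx, hK y hy]

end PseudoEMetric

section HausdorffMeasure

variable {X Y : Type*} [EMetricSpace X] [MeasurableSpace X] [BorelSpace X]
  [EMetricSpace Y] [MeasurableSpace Y] [BorelSpace Y] {w : X → ℝ≥0} {d : ℝ}

theorem hausdorffMeasure_image_le_of_factor_mem_Icc {φ : X → Y} (h : IsMobiusWith w φ)
    (hd : 0 ≤ d) {A : Set X} (hA : MeasurableSet A) {c r : ℝ≥0}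
    (hw : ∀ x ∈ A, w x ∈ Set.Icc c (r * c)) :
    μH[d] (φ '' A) ≤ (r ^ d : ℝ≥0) * ∫⁻ x in A, (w x ^ d : ℝ≥0) ∂μH[d] :=
  calc μH[d] (φ '' A) ≤ ((r * c : ℝ≥0) : ℝ≥0∞) ^ d * μH[d] A :=
        (h.lipschitzOnWith fun x hx ↦ (hw x hx).2).hausdorffMeasure_image_le hd
    _ = (r ^ d : ℝ≥0) * ∫⁻ _ in A, (c ^ d : ℝ≥0) ∂μH[d] := by
        rw [setLIntegral_const, ← mul_assoc, ← ENNReal.coe_rpow_of_nonneg _ hd, NNReal.mul_rpow,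
          ENNReal.coe_mul]
    _ ≤ (r ^ d : ℝ≥0) * ∫⁻ x in A, (w x ^ d : ℝ≥0) ∂μH[d] :=
        mul_le_mul' le_rfl <| setLIntegral_mono' hA fun x hx ↦
          ENNReal.coe_le_coe.2 (NNReal.rpow_le_rpow (hw x hx).1 hd)

theorem hausdorffMeasure_image_le_rpow_mul {φ : X → Y} (h : IsMobiusWith w φ) (hw : Measurable w)
    (hd : 0 ≤ d) {A : Set X} (hA : MeasurableSet A) {r : ℝ≥0} (hr : 1 < r) :
    μH[d] (φ '' A) ≤ (r ^ d : ℝ≥0) * ∫⁻ x in A, (w x ^ d : ℝ≥0) ∂μH[d] := by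
  let B (k : ℤ) : Set X := A ∩ w ⁻¹' Set.Ico (r ^ k) (r ^ (k + 1))
  have hB_meas (k) : MeasurableSet (B k) := hA.inter (hw measurableSet_Ico)
  have hB_disj : Pairwise (Function.onFun Disjoint B) := fun i j hij ↦
    (((zpow_right_mono₀ hr.le).pairwise_disjoint_on_Ico_succ hij).preimage w).mono
      Set.inter_subset_right Set.inter_subset_right
  have hB_union : ⋃ k, B k = A := by
    rw [← Set.inter_iUnion, Set.inter_eq_left]
    exact fun x _ ↦ Set.mem_iUnion.2
      (exists_mem_Ico_zpow (pos_iff_ne_zero.2 (h.factor_ne_zero x)) hr)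
  have hB_factor (k) : ∀ x ∈ B k, w x ∈ Set.Icc (r ^ k) (r * r ^ k) := fun x hx ↦
    ⟨hx.2.1, by rw [← zpow_one_add₀ (zero_lt_one.trans hr).ne', add_comm]; exact hx.2.2.le⟩
  calc μH[d] (φ '' A) = μH[d] (⋃ k, φ '' B k) := by rw [← Set.image_iUnion, hB_union]
    _ ≤ ∑' k, μH[d] (φ '' B k) := measure_iUnion_le _
    _ ≤ ∑' k, (r ^ d : ℝ≥0) * ∫⁻ x in B k, (w x ^ d : ℝ≥0) ∂μH[d] :=
        ENNReal.tsum_le_tsum fun k ↦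
          h.hausdorffMeasure_image_le_of_factor_mem_Icc hd (hB_meas k) (hB_factor k)
    _ = (r ^ d : ℝ≥0) * ∫⁻ x in A, (w x ^ d : ℝ≥0) ∂μH[d] := by
        rw [ENNReal.tsum_mul_left, ← lintegral_iUnion hB_meas hB_disj, hB_union]

theorem hausdorffMeasure_image_le {φ : X → Y} (h : IsMobiusWith w φ) (hw : Measurable w)
    (hd : 0 ≤ d) {A : Set X} (hA : MeasurableSet A) :
    μH[d] (φ '' A) ≤ ∫⁻ x in A, (w x ^ d : ℝ≥0) ∂μH[d] := by
  have hlim : Filter.Tendsto (fun r : ℝ≥0 ↦ ((r ^ d : ℝ≥0) : ℝ≥0∞) *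
      ∫⁻ x in A, (w x ^ d : ℝ≥0) ∂μH[d]) (𝓝[>] 1)
      (𝓝 (((1 ^ d : ℝ≥0) : ℝ≥0∞) * ∫⁻ x in A, (w x ^ d : ℝ≥0) ∂μH[d])) :=
    ENNReal.Tendsto.mul_const
      (ENNReal.tendsto_coe.2 ((NNReal.continuous_rpow_const hd).tendsto 1 |>.mono_left
        nhdsWithin_le_nhds))
      (.inl (by simp))
  rw [NNReal.one_rpow, ENNReal.coe_one, one_mul] at hlim
  exact ge_of_tendsto hlim <| eventually_mem_nhdsWithin.mono fun r hr ↦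
    h.hausdorffMeasure_image_le_rpow_mul hw hd hA hr

theorem map_hausdorffMeasure_le {e : X ≃ᵐ Y} (h : IsMobiusWith w e) (hw : Measurable w)
    (hd : 0 ≤ d) :
    μH[d].map e ≤ μH[d].withDensity fun y ↦ ((w (e.symm y))⁻¹ ^ d : ℝ≥0) := by
  refine Measure.le_iff.2 fun B hB ↦ ?_
  rw [e.map_apply, withDensity_apply _ hB, ← e.image_symm]
  exact h.symm (e := e.toEquiv).hausdorffMeasure_image_le (hw.comp e.symm.measurable).inv hd hB

theorem measurePreserving_withDensity {e : X ≃ᵐ Y} (h : IsMobiusWith w e) (hw : Measurable w)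
    (hd : 0 ≤ d) :
    MeasurePreserving e (μH[d].withDensity fun x ↦ (w x ^ d : ℝ≥0)) μH[d] := by
  refine ⟨e.measurable, Measure.ext fun B hB ↦ ?_⟩
  rw [e.map_apply, withDensity_apply _ (e.measurable hB)]
  refine le_antisymm ?_ ?_
  · have hw_symm : Measurable fun y ↦ w (e.symm y) := hw.comp e.symm.measurable
    have hinv_meas : Measurable fun y ↦ (((w (e.symm y))⁻¹ ^ d : ℝ≥0) : ℝ≥0∞) :=
      (hw_symm.inv.pow_const d).coe_nnreal_ennreal
    have hcancel (y : Y) : (w (e.symm y))⁻¹ ^ d * w (e.symm y) ^ d = 1 := by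
      rw [← NNReal.mul_rpow, inv_mul_cancel₀ (h.factor_ne_zero _), NNReal.one_rpow]
    calc ∫⁻ x in e ⁻¹' B, (w x ^ d : ℝ≥0) ∂μH[d]
        = ∫⁻ y in B, (w (e.symm y) ^ d : ℝ≥0) ∂μH[d].map e := by
          simp only [e.restrict_map, lintegral_map_equiv, e.symm_apply_apply]
      _ ≤ ∫⁻ y in B, (w (e.symm y) ^ d : ℝ≥0)
            ∂μH[d].withDensity fun y ↦ ((w (e.symm y))⁻¹ ^ d : ℝ≥0) :=
          lintegral_mono' (Measure.restrict_mono_measure (h.map_hausdorffMeasure_le hw hd) B) le_rfl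
      _ = ∫⁻ y in B, ((w (e.symm y))⁻¹ ^ d * w (e.symm y) ^ d : ℝ≥0) ∂μH[d] := by
          rw [setLIntegral_withDensity_eq_setLIntegral_mul _ hinv_meas
            (hw_symm.pow_const d).coe_nnreal_ennreal hB]
          simp only [Pi.mul_apply, ENNReal.coe_mul]
      _ = μH[d] B := by simp only [hcancel, ENNReal.coe_one, setLIntegral_one]
  · calc μH[d] B = μH[d] (e '' (e ⁻¹' B)) := by rw [e.image_preimage]
      _ ≤ ∫⁻ x in e ⁻¹' B, (w x ^ d : ℝ≥0) ∂μH[d] :=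
          h.hausdorffMeasure_image_le hw hd (e.measurable hB)

variable {F : Type*} [NormedAddCommGroup F] [NormedSpace ℝ F]

theorem integrable_iff_integrable_smul_comp {e : X ≃ᵐ Y} (h : IsMobiusWith w e)
    (hw : Measurable w) (hd : 0 ≤ d) {f : Y → F} :
    Integrable f μH[d] ↔ Integrable (fun x ↦ w x ^ d • f (e x)) μH[d] := by
  rw [← (h.measurePreserving_withDensity hw hd).integrable_comp_emb e.measurableEmbedding,
    integrable_withDensity_iff_integrable_smul (hw.pow_const d)]
  rfl

theorem integral_eq_integral_smul_comp {e : X ≃ᵐ Y} (h : IsMobiusWith w e) (hw : Measurable w)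
    (hd : 0 ≤ d) (f : Y → F) :
    ∫ y, f y ∂μH[d] = ∫ x, w x ^ d • f (e x) ∂μH[d] := by
  rw [← (h.measurePreserving_withDensity hw hd).integral_comp' f,
    integral_withDensity_eq_integral_smul (hw.pow_const d)]

end HausdorffMeasure

end IsMobiusWith

theorem map_subtype_coe_hausdorffMeasure {X : Type*} [EMetricSpace X] [MeasurableSpace X]
    [BorelSpace X] {d : ℝ} (hd : 0 ≤ d) (s : Set X) :
    (μH[d] : Measure s).map (↑) = μH[d].restrict s := by
  rw [isometry_subtype_coe.map_hausdorffMeasure (.inl hd), Subtype.range_coe]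

theorem sqrt_one_sub_norm_sq_pos {E : Type*} [SeminormedAddCommGroup E] {b : E}
    (hb : ‖b‖ < 1) : 0 < √(1 - ‖b‖ ^ 2) :=
  Real.sqrt_pos.2 (by nlinarith [norm_nonneg b])

theorem norm_sq_eq_one_sub_sqrt_sq {E : Type*} [SeminormedAddCommGroup E] {b : E}
    (hb : ‖b‖ ≤ 1) : ‖b‖ ^ 2 = 1 - √(1 - ‖b‖ ^ 2) ^ 2 := by
  rw [Real.sq_sqrt (by nlinarith [norm_nonneg b]), sub_sub_cancel]

section Sphere

variable {E : Type*} [NormedAddCommGroup E] [InnerProductSpace ℝ E] {b x y : E}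

/-- The conformal factor `s_b / (1 - b·x)` of the Möbius transformation `φ_b` at `x`. -/
noncomputable def mobiusFactor (b x : E) : ℝ := √(1 - ‖b‖ ^ 2) / (1 - ⟪b, x⟫_ℝ)

/-- The Möbius transformation `φ_b` in a real inner product space. Compared with `phiMap`, the
identity `|b|² = (1 - s_b)(1 + s_b)` is used to cancel `|b|²` from the denominators, so that
`b = 0` gives `φ_0 x = -x` without dividing by zero. -/
noncomputable def mobiusMap (b x : E) : E :=
  (1 - ⟪b, x⟫_ℝ)⁻¹ • ((1 - ⟪b, x⟫_ℝ / (1 + √(1 - ‖b‖ ^ 2))) • b - √(1 - ‖b‖ ^ 2) • x)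

theorem one_sub_inner_pos (hb : ‖b‖ < 1) (hx : ‖x‖ = 1) : 0 < 1 - ⟪b, x⟫_ℝ := by
  have := real_inner_le_norm b x
  rw [hx, mul_one] at this
  linarith

theorem mobiusFactor_pos (hb : ‖b‖ < 1) (hx : ‖x‖ = 1) : 0 < mobiusFactor b x :=
  div_pos (sqrt_one_sub_norm_sq_pos hb) (one_sub_inner_pos hb hx)

theorem phiMap_eq_mobiusMap {n : ℕ} {b : Euc (n + 1)} (hb₀ : 0 < ‖b‖) (hb₁ : ‖b‖ < 1)
    (x : Euc (n + 1)) : phiMap b x = mobiusMap b x := by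
  have hs := sqrt_one_sub_norm_sq_pos hb₁
  have hN := norm_sq_eq_one_sub_sqrt_sq hb₁.le
  rw [phiMap, mobiusMap, real_inner_comm]
  set s := √(1 - ‖b‖ ^ 2)
  have hcoeff : 1 - ⟪b, x⟫_ℝ / (1 + s) = 1 - ⟪b, x⟫_ℝ / ‖b‖ ^ 2 + s * (⟪b, x⟫_ℝ / ‖b‖ ^ 2) := by
    field_simp
    rw [hN]
    ring
  rw [hcoeff]
  module

theorem inner_mobiusMap_mobiusMap (hb : ‖b‖ < 1) (hx : ‖x‖ = 1) (hy : ‖y‖ = 1) :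
    ⟪mobiusMap b x, mobiusMap b y⟫_ℝ =
      1 - mobiusFactor b x * mobiusFactor b y * (1 - ⟪x, y⟫_ℝ) := by
  have hs := sqrt_one_sub_norm_sq_pos hb
  have hN := norm_sq_eq_one_sub_sqrt_sq hb.le
  have hx' := (one_sub_inner_pos hb hx).ne'
  have hy' := (one_sub_inner_pos hb hy).ne'
  simp only [mobiusMap, mobiusFactor]
  set s := √(1 - ‖b‖ ^ 2)
  simp only [inner_smul_left, inner_smul_right, inner_sub_left, inner_sub_right,
    real_inner_self_eq_norm_sq, hN, real_inner_comm b x, conj_trivial]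
  field_simp
  ring

theorem one_sub_inner_mobiusMap (hb : ‖b‖ < 1) (hx : ‖x‖ = 1) :
    1 - ⟪b, mobiusMap b x⟫_ℝ = √(1 - ‖b‖ ^ 2) ^ 2 / (1 - ⟪b, x⟫_ℝ) := by
  have hs := sqrt_one_sub_norm_sq_pos hb
  have hN := norm_sq_eq_one_sub_sqrt_sq hb.le
  have hx' := (one_sub_inner_pos hb hx).ne'
  rw [mobiusMap]
  set s := √(1 - ‖b‖ ^ 2)
  simp only [inner_smul_right, inner_sub_right, real_inner_self_eq_norm_sq, hN]
  field_simp
  ring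

theorem norm_mobiusMap (hb : ‖b‖ < 1) (hx : ‖x‖ = 1) : ‖mobiusMap b x‖ = 1 := by
  have h := inner_mobiusMap_mobiusMap hb hx hx
  rw [real_inner_self_eq_norm_sq, real_inner_self_eq_norm_sq, hx, one_pow, sub_self, mul_zero,
    sub_zero] at h
  exact (pow_eq_one_iff_of_nonneg (norm_nonneg _) two_ne_zero).1 h

theorem mobiusMap_mobiusMap (hb : ‖b‖ < 1) (hx : ‖x‖ = 1) : mobiusMap b (mobiusMap b x) = x := by
  have hs := sqrt_one_sub_norm_sq_pos hb
  have hx' := (one_sub_inner_pos hb hx).ne'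
  have hinner := one_sub_inner_mobiusMap hb hx
  rw [mobiusMap, hinner, ← sub_sub_cancel 1 ⟪b, mobiusMap b x⟫_ℝ, hinner, mobiusMap]
  match_scalars <;> field_simp
  ring

theorem dist_mobiusMap_sq (hb : ‖b‖ < 1) (hx : ‖x‖ = 1) (hy : ‖y‖ = 1) :
    dist (mobiusMap b x) (mobiusMap b y) ^ 2 =
      mobiusFactor b x * mobiusFactor b y * dist x y ^ 2 := by
  rw [dist_eq_norm, dist_eq_norm, norm_sub_sq_real, norm_sub_sq_real,
    inner_mobiusMap_mobiusMap hb hx hy, norm_mobiusMap hb hx, norm_mobiusMap hb hy, hx, hy]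
  ring

theorem continuousOn_mobiusMap_sphere (hb : ‖b‖ < 1) :
    ContinuousOn (mobiusMap b) (sphere (0 : E) 1) := by
  have hne : ∀ x ∈ sphere (0 : E) 1, 1 - ⟪b, x⟫_ℝ ≠ 0 := fun x hx ↦
    (one_sub_inner_pos hb (mem_sphere_zero_iff_norm.1 hx)).ne'
  unfold mobiusMap
  fun_prop (disch := assumption)

theorem mobiusFactor_rpow (hb : ‖b‖ < 1) (hx : ‖x‖ = 1) (d : ℝ) :
    mobiusFactor b x ^ d = (1 - ‖b‖ ^ 2) ^ (d / 2) * ((1 - ⟪b, x⟫_ℝ) ^ d)⁻¹ := by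
  rw [mobiusFactor, Real.div_rpow (Real.sqrt_nonneg _) (one_sub_inner_pos hb hx).le,
    Real.sqrt_eq_rpow, ← Real.rpow_mul (Real.sqrt_pos.1 (sqrt_one_sub_norm_sq_pos hb)).le,
    one_div_mul_eq_div, div_eq_mul_inv]

variable [MeasurableSpace E] [BorelSpace E]

/-- The Möbius transformation `φ_b`, for `|b| < 1`, as an involution of the unit sphere. -/
noncomputable def sphereMobius (hb : ‖b‖ < 1) : sphere (0 : E) 1 ≃ᵐ sphere (0 : E) 1 :=
  have hmaps : Set.MapsTo (mobiusMap b) (sphere 0 1) (sphere 0 1) := fun _ hx ↦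
    mem_sphere_zero_iff_norm.2 (norm_mobiusMap hb (mem_sphere_zero_iff_norm.1 hx))
  .ofInvolutive (hmaps.restrict (mobiusMap b) (sphere 0 1) (sphere 0 1))
    (fun x ↦ Subtype.ext (mobiusMap_mobiusMap hb (norm_eq_of_mem_sphere x)))
    ((continuousOn_mobiusMap_sphere hb).mapsToRestrict hmaps).measurable

theorem coe_sphereMobius (hb : ‖b‖ < 1) (x : sphere (0 : E) 1) :
    (sphereMobius hb x : E) = mobiusMap b x :=
  rfl

theorem isMobiusWith_sphereMobius (hb : ‖b‖ < 1) :
    IsMobiusWith (fun x : sphere (0 : E) 1 ↦ (mobiusFactor b x).toNNReal) (sphereMobius hb) where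
  factor_ne_zero x := (Real.toNNReal_pos.2 (mobiusFactor_pos hb (norm_eq_of_mem_sphere x))).ne'
  edist_sq x y := by
    have hx := norm_eq_of_mem_sphere x
    have hy := norm_eq_of_mem_sphere y
    rw [edist_nndist, edist_nndist]
    norm_cast
    apply NNReal.eq
    push_cast
    rw [Real.coe_toNNReal _ (mobiusFactor_pos hb hx).le,
      Real.coe_toNNReal _ (mobiusFactor_pos hb hy).le]
    exact dist_mobiusMap_sq hb hx hy

theorem measurable_mobiusFactor (b : E) : Measurable (mobiusFactor b) :=
  (by fun_prop : Measurable fun x ↦ 1 - ⟪b, x⟫_ℝ).const_div _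

variable {F : Type*} [NormedAddCommGroup F] [NormedSpace ℝ F]

theorem statement19_general {d : ℝ} (hd : 0 ≤ d) (hb : ‖b‖ < 1) {f : E → F}
    (hf : IntegrableOn f (sphere (0 : E) 1) μH[d]) :
    IntegrableOn (fun y ↦ ((1 - ⟪b, y⟫_ℝ) ^ d)⁻¹ • f (mobiusMap b y)) (sphere (0 : E) 1) μH[d] ∧
      ∫ x in sphere (0 : E) 1, f x ∂μH[d] =
        (1 - ‖b‖ ^ 2) ^ (d / 2) •
          ∫ y in sphere (0 : E) 1, ((1 - ⟪b, y⟫_ℝ) ^ d)⁻¹ • f (mobiusMap b y) ∂μH[d] := by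
  have hval := MeasurableEmbedding.subtype_coe (s := sphere (0 : E) 1) isClosed_sphere.measurableSet
  have hφ := isMobiusWith_sphereMobius hb
  have hw : Measurable fun x : sphere (0 : E) 1 ↦ (mobiusFactor b x).toNNReal :=
    ((measurable_mobiusFactor b).comp measurable_subtype_coe).real_toNNReal
  have hs : 0 < 1 - ‖b‖ ^ 2 := Real.sqrt_pos.1 (sqrt_one_sub_norm_sq_pos hb)
  have hdensity (x : sphere (0 : E) 1) :
      (mobiusFactor b x).toNNReal ^ d • f (sphereMobius hb x) =
        (1 - ‖b‖ ^ 2) ^ (d / 2) • ((1 - ⟪b, x⟫_ℝ) ^ d)⁻¹ • f (mobiusMap b x) := by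
    have hx := norm_eq_of_mem_sphere x
    rw [NNReal.smul_def, NNReal.coe_rpow, Real.coe_toNNReal _ (mobiusFactor_pos hb hx).le,
      mobiusFactor_rpow hb hx, mul_smul, coe_sphereMobius]
  simp only [IntegrableOn, ← map_subtype_coe_hausdorffMeasure hd] at hf ⊢
  simp only [hval.integrable_map_iff, hval.integral_map] at hf ⊢
  constructor
  · have h := (hφ.integrable_iff_integrable_smul_comp (f := fun x ↦ f x) hw hd).1 hf
    simp only [hdensity] at h
    exact (integrable_smul_iff (Real.rpow_pos_of_pos hs _).ne' _).1 h
  · rw [hφ.integral_eq_integral_smul_comp hw hd fun x ↦ f x]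
    simp only [hdensity, integral_smul]

end Sphere

/-- The change-of-variable formula (Lemma 2.1 of Agranovsky–Rubin):
for `0 < |b| < 1` and `f` integrable on `S^n`,
`∫_{S^n} f(x) dH^n(x) = (1 − |b|²)^{n/2} ∫_{S^n} f(φ_b y)/(1 − b·y)^n dH^n(y)`. -/
theorem statement19 (n : ℕ) (hn : 1 ≤ n)
    (b : Euc (n + 1)) (hb0 : 0 < ‖b‖) (hb1 : ‖b‖ < 1)
    (f : Euc (n + 1) → ℝ)
    (hf : IntegrableOn f (sphere (0 : Euc (n + 1)) 1) μH[(n : ℝ)]) :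
    (∫ x in sphere (0 : Euc (n + 1)) 1, f x ∂μH[(n : ℝ)]) =
      (1 - ‖b‖ ^ 2) ^ ((n : ℝ) / 2) *
        ∫ y in sphere (0 : Euc (n + 1)) 1,
          f (phiMap b y) / (1 - ⟪b, y⟫_ℝ) ^ n ∂μH[(n : ℝ)] := by
  simpa only [phiMap_eq_mobiusMap hb0 hb1, Real.rpow_natCast, smul_eq_mul, ← div_eq_inv_mul] using
    (statement19_general n.cast_nonneg hb1 hf).2
end
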